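/- Let D be a finite digraph and let ℓ be a positive integer. Then there exists a complete acyclic coloring of D using exactly ℓ colors if and only if χ⃗(D) ≤ ℓ ≤ adi(D). -/

import Mathlib

open Function

section Defs

variable {V : Type*}

/-- The vertex set `S` contains a directed cycle of the digraph `D`, i.e. there is a
closed directed walk of positive length all of whose vertices lie in `S`. -/
def HasDicycle (D : V → V → Prop) (S : Set V) : Prop :=
  ∃ v, Relation.TransGen (fun a b => a ∈ S ∧ b ∈ S ∧ D a b) v v

/-- A coloring of the vertices of the digraph `D` with `k` colors all of whose color
classes are acyclic. -/
def IsAcyclicColoring (D : V → V → Prop) {k : ℕ} (c : V → Fin k) : Prop :=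
  ∀ i, ¬ HasDicycle D (c ⁻¹' {i})

/-- A complete acyclic coloring of the digraph `D` with exactly `k` colors: every color is
used, every color class is acyclic, and the union of any two distinct color classes
contains a directed cycle. -/
def IsCompleteAcyclicColoring (D : V → V → Prop) {k : ℕ} (c : V → Fin k) : Prop :=
  Surjective c ∧ IsAcyclicColoring D c ∧
    ∀ i j : Fin k, i ≠ j → HasDicycle D (c ⁻¹' {i} ∪ c ⁻¹' {j})

/-- The dichromatic number: the minimum number of colors in an acyclic coloring. -/
noncomputable def dichromaticNumber (D : V → V → Prop) : ℕ :=
  sInf {k | ∃ c : V → Fin k, IsAcyclicColoring D c}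

/-- The adichromatic number: the maximum number of colors in a complete acyclic coloring. -/
noncomputable def adichromaticNumber (D : V → V → Prop) : ℕ :=
  sSup {k | ∃ c : V → Fin k, IsCompleteAcyclicColoring D c}

/-- A coloring of the vertices of the graph `G` all of whose color classes induce forests. -/
def IsArborealColoring (G : SimpleGraph V) {k : ℕ} (c : V → Fin k) : Prop :=
  ∀ i, (G.induce (c ⁻¹' {i})).IsAcyclic

/-- A complete arboreal coloring of `G` with exactly `k` colors: every color is used, every
color class induces a forest, and the union of any two distinct color classes contains a
cycle. -/
def IsCompleteArborealColoring (G : SimpleGraph V) {k : ℕ} (c : V → Fin k) : Prop :=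
  Surjective c ∧ IsArborealColoring G c ∧
    ∀ i j : Fin k, i ≠ j → ¬ (G.induce (c ⁻¹' {i} ∪ c ⁻¹' {j})).IsAcyclic

/-- The vertex arboricity: the minimum number of colors in an arboreal coloring. -/
noncomputable def vertexArboricity (G : SimpleGraph V) : ℕ :=
  sInf {k | ∃ c : V → Fin k, IsArborealColoring G c}

/-- The a-vertex arboricity: the maximum number of colors in a complete arboreal coloring. -/
noncomputable def avertexArboricity (G : SimpleGraph V) : ℕ :=
  sSup {k | ∃ c : V → Fin k, IsCompleteArborealColoring G c}

/-- The minimum size of a directed feedback vertex set of the digraph `D`. -/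
noncomputable def digraphFVSNumber [Fintype V] (D : V → V → Prop) : ℕ :=
  sInf {n | ∃ F : Finset V, F.card = n ∧ ¬ HasDicycle D ((↑F : Set V)ᶜ)}

/-- The minimum size of a feedback vertex set of the graph `G`. -/
noncomputable def graphFVSNumber [Fintype V] (G : SimpleGraph V) : ℕ :=
  sInf {n | ∃ F : Finset V, F.card = n ∧ (G.induce ((↑F : Set V)ᶜ)).IsAcyclic}

/-- A complete coloring in the sense of the diachromatic number: all classes are acyclic
and for every ordered pair `(i, j)` of distinct colors there is an arc with tail colored
`j` and head colored `i`. -/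
def IsCompleteDiColoring (D : V → V → Prop) {k : ℕ} (c : V → Fin k) : Prop :=
  Surjective c ∧ IsAcyclicColoring D c ∧
    ∀ i j : Fin k, i ≠ j → ∃ u v, D u v ∧ c u = j ∧ c v = i

/-- The diachromatic number of the digraph `D`. -/
noncomputable def diachromaticNumber (D : V → V → Prop) : ℕ :=
  sSup {k | ∃ c : V → Fin k, IsCompleteDiColoring D c}

/-- A complete proper coloring of the graph `G`: proper, surjective, and any two distinct
colors appear together on some edge. -/
def IsCompleteProperColoring (G : SimpleGraph V) {k : ℕ} (c : V → Fin k) : Prop :=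
  Surjective c ∧ (∀ u v, G.Adj u v → c u ≠ c v) ∧
    ∀ i j : Fin k, i ≠ j → ∃ u v, G.Adj u v ∧ c u = i ∧ c v = j

/-- The achromatic number: the maximum number of colors in a complete proper coloring. -/
noncomputable def achromaticNumber (G : SimpleGraph V) : ℕ :=
  sSup {k | ∃ c : V → Fin k, IsCompleteProperColoring G c}

/-- The subdigraph of `D` induced by the vertex set `S`. -/
def induceDigraph (D : V → V → Prop) (S : Set V) : S → S → Prop :=
  fun a b => D a.1 b.1

/-- `D` is an orientation of the simple graph `G`: every arc of `D` is an edge of `G`, and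
every edge of `G` is given exactly one of its two possible directions. -/
def IsOrientation (G : SimpleGraph V) (D : V → V → Prop) : Prop :=
  (∀ u v, D u v → G.Adj u v) ∧ ∀ u v, G.Adj u v → Xor' (D u v) (D v u)

end Defs

/-!
Fix a complete acyclic coloring `h` with `adi(D)` colors. For a set `A` of its colors, let `χ A` be
the least number of colors of an acyclic coloring that is constant on each class of `h` with color
in `A`. Then `χ ∅` is the dichromatic number, `χ univ` is the number of colors of `h` because no two
classes of `h` can be merged, and adding a color to `A` increases `χ A` by at most one, since the
corresponding class can be given a fresh color. Hence a maximal `A` with `χ A ≤ ℓ` has `χ A = ℓ`.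
A coloring attaining `χ A = ℓ` is complete: merging two of its classes into an acyclic one would
save a color.

Nothing about directed cycles matters beyond the fact that subsets of acyclic sets are acyclic, so
the argument is carried out for colorings with classes in an arbitrary lower set of vertex sets.
-/

section HereditaryColorings

variable {V α β : Type*} {𝓘 : Set (Set V)} {r s : V → V → Prop} {m n k ℓ : ℕ}

/-- A coloring all of whose classes, possibly empty, belong to the family `𝓘`. Acyclic colorings
are the case where `𝓘` consists of the acyclic sets. -/
def IsColoringBy (𝓘 : Set (Set V)) (c : V → α) : Prop :=
  ∀ i, c ⁻¹' {i} ∈ 𝓘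

/-- A coloring by nonempty members of `𝓘` such that the union of two distinct classes is never in
`𝓘`; the analogue for `𝓘` of a complete acyclic coloring. -/
structure IsCompleteColoringBy (𝓘 : Set (Set V)) (c : V → α) : Prop where
  surjective : Surjective c
  isColoringBy : IsColoringBy 𝓘 c
  union_notMem : ∀ i j, i ≠ j → c ⁻¹' {i} ∪ c ⁻¹' {j} ∉ 𝓘

/-- Colorability with at most `n` colors by members of `𝓘` that do not separate `r`-related
vertices, i.e. colorability of the quotient of `V` by the equivalence relation generated by `r`. -/
def ColorableAlong (𝓘 : Set (Set V)) (r : V → V → Prop) (n : ℕ) : Prop :=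
  ∃ c : V → Fin n, IsColoringBy 𝓘 c ∧ ∀ u v, r u v → c u = c v

/-- The relation of lying in a common class of `h` whose color belongs to `A`. Colorings along it
are those that keep the classes of `h` with colors in `A` in one piece. -/
def SameClassIn (h : V → β) (A : Set β) (u v : V) : Prop :=
  h u = h v ∧ h u ∈ A

theorem IsColoringBy.of_comp (h𝓘 : IsLowerSet 𝓘) {c : V → α} {g : α → β}
    (hgc : IsColoringBy 𝓘 (g ∘ c)) : IsColoringBy 𝓘 c := by
  intro i
  refine h𝓘 ?_ (hgc (g i))
  rintro v rfl
  rfl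

theorem IsColoringBy.comp_injective (h_empty : ∅ ∈ 𝓘) {c : V → α} (hc : IsColoringBy 𝓘 c)
    {g : α → β} (hg : Injective g) : IsColoringBy 𝓘 (g ∘ c) := by
  intro j
  rw [Set.preimage_comp]
  by_cases hj : j ∈ Set.range g
  · obtain ⟨i, rfl⟩ := hj
    rw [← Set.image_singleton, hg.preimage_image]
    exact hc i
  · rwa [Set.preimage_singleton_eq_empty.2 hj, Set.preimage_empty]

theorem IsColoringBy.update_id_comp [DecidableEq α] (h𝓘 : IsLowerSet 𝓘) {c : V → α}
    (hc : IsColoringBy 𝓘 c) {i j : α} (hij : c ⁻¹' {i} ∪ c ⁻¹' {j} ∈ 𝓘) :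
    IsColoringBy 𝓘 (update id i j ∘ c) := by
  intro a
  by_cases ha : a = j
  · refine h𝓘 (fun v hv => ?_) hij
    by_cases hvi : c v = i <;> simp_all
  · refine h𝓘 (fun v hv => ?_) (hc a)
    by_cases hvi : c v = i <;> simp_all

theorem IsColoringBy.ite_zero_succ (h𝓘 : IsLowerSet 𝓘) {c : V → Fin n} (hc : IsColoringBy 𝓘 c)
    {S : Set V} [DecidablePred (· ∈ S)] (hS : S ∈ 𝓘) :
    IsColoringBy 𝓘 (fun v => if v ∈ S then 0 else (c v).succ) := by
  refine Fin.cases (h𝓘 (fun v hv => ?_) hS) fun i => h𝓘 (fun v hv => ?_) (hc i)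
  all_goals by_cases hvS : v ∈ S <;> simp_all [(Fin.succ_ne_zero _).symm]

theorem IsCompleteColoringBy.injective_of_isColoringBy_comp (h𝓘 : IsLowerSet 𝓘) {h : V → β}
    (hh : IsCompleteColoringBy 𝓘 h) {g : β → α} (hgh : IsColoringBy 𝓘 (g ∘ h)) :
    Injective g := by
  intro a b hab
  by_contra hne
  refine hh.union_notMem a b hne (h𝓘 ?_ (hgh (g a)))
  rintro v (rfl | rfl)
  exacts [rfl, hab.symm]

theorem ColorableAlong.of_le (h_empty : ∅ ∈ 𝓘) (hmn : m ≤ n) (hm : ColorableAlong 𝓘 r m) :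
    ColorableAlong 𝓘 r n := by
  obtain ⟨c, hc, hcr⟩ := hm
  exact ⟨Fin.castLE hmn ∘ c, hc.comp_injective h_empty (Fin.castLE_injective hmn),
    fun u v huv => congrArg (Fin.castLE hmn) (hcr u v huv)⟩

theorem ColorableAlong.succ_of_mem (h𝓘 : IsLowerSet 𝓘) (hn : ColorableAlong 𝓘 r n) {S : Set V}
    (hS : S ∈ 𝓘) (hs : ∀ u v, s u v → u ∈ S ∧ v ∈ S ∨ u ∉ S ∧ v ∉ S ∧ r u v) :
    ColorableAlong 𝓘 s (n + 1) := by
  classical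
  obtain ⟨c, hc, hcr⟩ := hn
  refine ⟨_, hc.ite_zero_succ h𝓘 hS, fun u v huv => ?_⟩
  obtain ⟨hu, hv⟩ | ⟨hu, hv, hr⟩ := hs u v huv
  · rw [if_pos hu, if_pos hv]
  · rw [if_neg hu, if_neg hv, hcr u v hr]

theorem ColorableAlong.sameClassIn_insert (h𝓘 : IsLowerSet 𝓘) {h : V → β} (hh : IsColoringBy 𝓘 h)
    {A : Set β} (hn : ColorableAlong 𝓘 (SameClassIn h A) n) (a : β) :
    ColorableAlong 𝓘 (SameClassIn h (insert a A)) (n + 1) := by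
  refine hn.succ_of_mem h𝓘 (hh a) fun u v ⟨huv, hu⟩ => ?_
  by_cases hua : h u = a
  · exact Or.inl ⟨hua, huv.symm.trans hua⟩
  · exact Or.inr ⟨hua, fun hva => hua (huv.trans hva), huv, hu.resolve_left hua⟩

theorem IsColoringBy.exists_lt_colorableAlong (h𝓘 : IsLowerSet 𝓘) {c : V → Fin n}
    (hc : IsColoringBy 𝓘 c) (hcr : ∀ u v, r u v → c u = c v) {i : Fin n} (hi : ∀ v, c v ≠ i) :
    ∃ m < n, ColorableAlong 𝓘 r m := by
  obtain _ | m := n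
  · exact i.elim0
  choose d hd using fun v => Fin.exists_succAbove_eq (hi v)
  obtain rfl : i.succAbove ∘ d = c := funext hd
  exact ⟨m, m.lt_succ_self, d, hc.of_comp h𝓘,
    fun u v huv => Fin.succAbove_right_injective (hcr u v huv)⟩

theorem exists_isCompleteColoringBy_of_isLeast (h𝓘 : IsLowerSet 𝓘)
    (hn : IsLeast {n | ColorableAlong 𝓘 r n} n) :
    ∃ c : V → Fin n, IsCompleteColoringBy 𝓘 c := by
  obtain ⟨⟨c, hc, hcr⟩, hmin⟩ := hn
  have uses_every_color (d : V → Fin n) (hd : IsColoringBy 𝓘 d)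
      (hdr : ∀ u v, r u v → d u = d v) : Surjective d := by
    intro i
    by_contra! hi
    obtain ⟨m, hmn, hm⟩ := hd.exists_lt_colorableAlong h𝓘 hdr hi
    exact hmn.not_ge (hmin hm)
  refine ⟨c, uses_every_color c hc hcr, hc, fun i j hij hunion => ?_⟩
  obtain ⟨v, hv⟩ := uses_every_color _ (hc.update_id_comp h𝓘 hunion)
    (fun u v huv => congrArg (update id i j) (hcr u v huv)) i
  by_cases hvi : c v = i <;> simp_all

theorem IsCompleteColoringBy.card_le_of_colorableAlong (h𝓘 : IsLowerSet 𝓘)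
    {h : V → β} (hh : IsCompleteColoringBy 𝓘 h)
    (hn : ColorableAlong 𝓘 (SameClassIn h Set.univ) n) : Nat.card β ≤ n := by
  obtain ⟨c, hc, hch⟩ := hn
  have c_factors : (c ∘ surjInv hh.surjective) ∘ h = c :=
    funext fun v => hch _ _ ⟨surjInv_eq hh.surjective (h v), Set.mem_univ _⟩
  have representatives_injective : Injective (c ∘ surjInv hh.surjective) :=
    hh.injective_of_isColoringBy_comp h𝓘 (c_factors.symm ▸ hc)
  simpa only [Nat.card_fin] using Nat.card_le_card_of_injective _ representatives_injective

theorem IsCompleteColoringBy.exists_of_le_of_le (h𝓘 : IsLowerSet 𝓘) {f : V → Fin m}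
    (hf : IsColoringBy 𝓘 f) {h : V → Fin k} (hh : IsCompleteColoringBy 𝓘 h)
    (hmℓ : m ≤ ℓ) (hℓk : ℓ ≤ k) : ∃ c : V → Fin ℓ, IsCompleteColoringBy 𝓘 c := by
  obtain rfl | hℓk := hℓk.eq_or_lt
  · exact ⟨h, hh⟩
  have h_empty : ∅ ∈ 𝓘 := h𝓘 (Set.empty_subset _) (hh.isColoringBy ⟨ℓ, hℓk⟩)
  have colorable_keeping_none : ColorableAlong 𝓘 (SameClassIn h ∅) ℓ :=
    ColorableAlong.of_le h_empty hmℓ ⟨f, hf, fun _ _ huv => huv.2.elim⟩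
  obtain ⟨A, hA, hmax⟩ :=
    (Set.toFinite {A | ColorableAlong 𝓘 (SameClassIn h A) ℓ}).exists_maximal
      ⟨∅, colorable_keeping_none⟩
  have hA_ne_univ : A ≠ Set.univ := by
    rintro rfl
    have hkℓ : k ≤ ℓ := Nat.card_fin k ▸ hh.card_le_of_colorableAlong h𝓘 hA
    exact hkℓ.not_gt hℓk
  obtain ⟨a, ha⟩ := (Set.ne_univ_iff_exists_notMem A).1 hA_ne_univ
  refine exists_isCompleteColoringBy_of_isLeast h𝓘 ⟨hA, fun n hn => ?_⟩
  by_contra! hnℓ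
  have colorable_insert : ColorableAlong 𝓘 (SameClassIn h (insert a A)) ℓ :=
    (hn.sameClassIn_insert h𝓘 hh.isColoringBy a).of_le h_empty hnℓ
  exact ha (hmax colorable_insert (Set.subset_insert a A) (Set.mem_insert a A))

end HereditaryColorings

section AcyclicColorings

variable {V : Type*} {D : V → V → Prop} {k : ℕ}

theorem HasDicycle.mono {S T : Set V} (hST : S ⊆ T) (hS : HasDicycle D S) : HasDicycle D T := by
  obtain ⟨v, hv⟩ := hS
  exact ⟨v, Relation.TransGen.mono (fun _ _ ⟨ha, hb, hab⟩ => ⟨hST ha, hST hb, hab⟩) _ _ hv⟩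

theorem isLowerSet_not_hasDicycle (D : V → V → Prop) : IsLowerSet {S | ¬ HasDicycle D S} :=
  fun _ _ hST hS hT => hS (hT.mono hST)

theorem isCompleteAcyclicColoring_iff {c : V → Fin k} :
    IsCompleteAcyclicColoring D c ↔ IsCompleteColoringBy {S | ¬ HasDicycle D S} c :=
  ⟨fun ⟨hsurj, hc, hunion⟩ => ⟨hsurj, hc, fun i j hij => not_not.2 (hunion i j hij)⟩,
    fun hc => ⟨hc.surjective, hc.isColoringBy, fun i j hij => not_not.1 (hc.union_notMem i j hij)⟩⟩

theorem exists_isAcyclicColoring_dichromaticNumber {c : V → Fin k} (hc : IsAcyclicColoring D c) :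
    ∃ f : V → Fin (dichromaticNumber D), IsAcyclicColoring D f :=
  Nat.sInf_mem (s := {k | ∃ c : V → Fin k, IsAcyclicColoring D c}) ⟨k, c, hc⟩

theorem exists_isCompleteAcyclicColoring_adichromaticNumber
    (hbdd : BddAbove {k | ∃ c : V → Fin k, IsCompleteAcyclicColoring D c})
    (hpos : 0 < adichromaticNumber D) :
    ∃ h : V → Fin (adichromaticNumber D), IsCompleteAcyclicColoring D h := by
  refine Nat.sSup_mem (Set.nonempty_iff_ne_empty.2 fun h_empty => hpos.ne' ?_) hbdd
  rw [adichromaticNumber, h_empty, csSup_empty, Nat.bot_eq_zero]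

theorem bddAbove_isCompleteAcyclicColoring [Finite V] (D : V → V → Prop) :
    BddAbove {k | ∃ c : V → Fin k, IsCompleteAcyclicColoring D c} := by
  refine ⟨Nat.card V, ?_⟩
  rintro k ⟨c, hc, -⟩
  simpa only [Nat.card_fin] using Nat.card_le_card_of_surjective c hc

end AcyclicColorings

theorem interpolation_adichromatic_general {V : Type*} (D : V → V → Prop)
    (hbdd : BddAbove {k | ∃ c : V → Fin k, IsCompleteAcyclicColoring D c}) (ℓ : ℕ) (hℓ : 1 ≤ ℓ) :
    (∃ c : V → Fin ℓ, IsCompleteAcyclicColoring D c) ↔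
      dichromaticNumber D ≤ ℓ ∧ ℓ ≤ adichromaticNumber D := by
  constructor
  · rintro ⟨c, hc⟩
    exact ⟨Nat.sInf_le ⟨c, hc.2.1⟩, le_csSup hbdd ⟨c, hc⟩⟩
  · rintro ⟨hχ, hadi⟩
    obtain ⟨h, hh⟩ := exists_isCompleteAcyclicColoring_adichromaticNumber hbdd (hℓ.trans hadi)
    obtain ⟨f, hf⟩ := exists_isAcyclicColoring_dichromaticNumber hh.2.1
    simp only [isCompleteAcyclicColoring_iff] at hh ⊢
    exact hh.exists_of_le_of_le (isLowerSet_not_hasDicycle D) hf hχ hadi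

/-- a finite digraph `D` has a complete acyclic coloring with exactly `ℓ`
colors iff `χ⃗(D) ≤ ℓ ≤ adi(D)`. -/
theorem interpolation_adichromatic {V : Type*} [Fintype V] (D : V → V → Prop)
    (hD : Irreflexive D) (ℓ : ℕ) (hℓ : 1 ≤ ℓ) :
    (∃ c : V → Fin ℓ, IsCompleteAcyclicColoring D c) ↔
      dichromaticNumber D ≤ ℓ ∧ ℓ ≤ adichromaticNumber D :=
  interpolation_adichromatic_general D (bddAbove_isCompleteAcyclicColoring D) ℓ hℓ
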